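/- Let γ ∈ ℝ, let W be an M×M doubly stochastic matrix, Q = (1/M)·𝟙𝟙ᵀ, and let U^{[t]} (t ≥ 1) be d×M matrices. Suppose the d×M matrices X^{[t]} satisfy X^{[t]} = X^{[t−1]} W − γ U^{[t]} for all t ≥ 1, and all columns of X^{[0]} are identical. Then for every t ≥ 1, X^{[t]}(I − Q) = −γ ∑_{τ=1}^{t} U^{[τ]} (I − Q) W^{t−τ}. Moreover, if additionally U^{[t]} = ∑_{τ=1}^{t} α^{t−τ} Ḡ^{[τ]} W^{t−τ+1} for d×M matrices Ḡ^{[τ]} and α ∈ ℝ, then X^{[t]}(I − Q) = −γ ∑_{τ=1}^{t} (∑_{τ'=τ}^{t} α^{τ'−τ}) Ḡ^{[τ]} (I − Q) W^{t−τ+1}. -/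

import Mathlib

open scoped BigOperators

/-- Representation of the consensus error in the proof of Lemma 6 of the paper:
for `X^{[t]} = X^{[t−1]} W − γ U^{[t]}` with identical initial columns and
`Q = (1/M)·𝟙𝟙ᵀ`, one has
`X^{[t]}(I − Q) = −γ ∑_{τ=1}^t U^{[τ]} (I − Q) W^{t−τ}`, and, if moreover
`U^{[t]} = ∑_{τ=1}^t α^{t−τ} Ḡ^{[τ]} W^{t−τ+1}`, then
`X^{[t]}(I − Q) = −γ ∑_{τ=1}^t (∑_{τ'=τ}^t α^{τ'−τ}) Ḡ^{[τ]} (I − Q) W^{t−τ+1}`. -/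
theorem pdsl_consensus_error_representation {d M : ℕ} (γ α : ℝ)
    (W : Matrix (Fin M) (Fin M) ℝ)
    (hnonneg : ∀ i j, 0 ≤ W i j)
    (hrow : ∀ i, ∑ j, W i j = 1)
    (hcol : ∀ j, ∑ i, W i j = 1)
    (U X G : ℕ → Matrix (Fin d) (Fin M) ℝ)
    (hX : ∀ t, 1 ≤ t → X t = X (t - 1) * W - γ • U t)
    (hX0 : ∀ i j j', X 0 i j = X 0 i j') :
    let Q : Matrix (Fin M) (Fin M) ℝ := Matrix.of fun _ _ => (M : ℝ)⁻¹
    (∀ t, 1 ≤ t →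
      X t * (1 - Q) = -γ • ∑ τ ∈ Finset.Icc 1 t, U τ * ((1 - Q) * W ^ (t - τ)))
    ∧ ((∀ t, 1 ≤ t →
          U t = ∑ τ ∈ Finset.Icc 1 t, α ^ (t - τ) • (G τ * W ^ (t - τ + 1))) →
        ∀ t, 1 ≤ t →
          X t * (1 - Q) = -γ • ∑ τ ∈ Finset.Icc 1 t,
            (∑ τ' ∈ Finset.Icc τ t, α ^ (τ' - τ)) •
              (G τ * ((1 - Q) * W ^ (t - τ + 1)))) := by
  intro Q
  have hQ : Commute (1 - Q) W := by
    apply Commute.sub_left (Commute.one_left W)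
    ext i j
    simp only [Q, Matrix.mul_apply, Matrix.of_apply]
    rw [← Finset.mul_sum, ← Finset.sum_mul, hrow, hcol, mul_one, one_mul]
  have h0 : X 0 * (1 - Q) = 0 := by
    ext i j
    have hM : (M : ℝ) ≠ 0 := by
      have := j.pos
      positivity
    have h1 : (X 0 * Q) i j = X 0 i j := by
      simp only [Q, Matrix.mul_apply, Matrix.of_apply]
      rw [Finset.sum_congr rfl (fun k _ => by rw [hX0 i k j])]
      simp
      field_simp
    rw [Matrix.mul_sub, Matrix.mul_one, Matrix.sub_apply, h1]
    simp
  have key : ∀ t, X t * (1 - Q) =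
      -γ • ∑ τ ∈ Finset.Icc 1 t, U τ * ((1 - Q) * W ^ (t - τ)) := by
    intro t
    induction t with
    | zero => simpa using h0
    | succ n ih =>
      rw [hX (n + 1) (by omega), Nat.add_sub_cancel, Matrix.sub_mul, Matrix.mul_assoc,
        ← hQ.eq, ← Matrix.mul_assoc, ih, Finset.sum_Icc_succ_top (by omega), smul_add,
        Matrix.smul_mul, Matrix.smul_mul, Matrix.sum_mul, Nat.sub_self, pow_zero,
        Matrix.mul_one, neg_smul γ (U (n + 1) * (1 - Q)), ← sub_eq_add_neg]
      congr 2
      apply Finset.sum_congr rfl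
      intro τ hτ
      have := (Finset.mem_Icc.mp hτ).2
      rw [show n + 1 - τ = (n - τ) + 1 by omega, pow_succ]
      simp only [Matrix.mul_assoc]
  refine ⟨fun t _ => key t, fun hU t _ => ?_⟩
  rw [key t]
  congr 1
  have e : ∀ s ∈ Finset.Icc 1 t, U s * ((1 - Q) * W ^ (t - s)) =
      ∑ τ ∈ Finset.Icc 1 s, α ^ (s - τ) • (G τ * ((1 - Q) * W ^ (t - τ + 1))) := by
    intro s hs
    have hs' := Finset.mem_Icc.mp hs
    rw [hU s hs'.1, Matrix.sum_mul]
    apply Finset.sum_congr rfl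
    intro τ hτ
    have := (Finset.mem_Icc.mp hτ).2
    rw [Matrix.smul_mul, Matrix.mul_assoc, ← Matrix.mul_assoc (W ^ _),
      ← (hQ.pow_right _).eq, Matrix.mul_assoc, ← pow_add,
      show s - τ + 1 + (t - s) = t - τ + 1 by omega]
  rw [Finset.sum_congr rfl e]
  simp only [Finset.sum_smul]
  apply Finset.sum_comm'
  intro x y
  simp only [Finset.mem_Icc]
  omega
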